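/- Let X be a smooth projective variety of dimension 2d over ℂ and let ℰ ∈ D^b(X) be a ℙ^d-object with associated ℙ^d-twist P_ℰ. Then for every t ≤ 0, h_t(P_ℰ) ≤ -2dt. -/

import Mathlib

open CategoryTheory CategoryTheory.Limits CategoryTheory.Pretriangulated Filter

universe v u

variable (C : Type u) [Category.{v} C] [Preadditive C] [HasZeroObject C]
  [HasShift C ℤ] [∀ n : ℤ, (shiftFunctor C n).Additive] [Pretriangulated C]
  [HasFiniteBiproducts C] [CategoryTheory.Linear ℂ C]
  [∀ X Y : C, Module.Finite ℂ (X ⟶ Y)]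

/-- `BuildVal E t B r` : the object `B` can be built from the zero object by a tower of
`k` distinguished triangles whose successive cones are shifts `E⟦nᵢ⟧` of `E`,
with total weight `r = ∑ᵢ exp(nᵢ t)`. -/
inductive BuildVal (E : C) (t : ℝ) : C → ℝ → Prop
  | zero (Z : C) (hZ : IsZero Z) : BuildVal E t Z 0
  | step (A B : C) (n : ℤ) (r : ℝ)
      (f : A ⟶ B) (g : B ⟶ (shiftFunctor C n).obj E)
      (h : (shiftFunctor C n).obj E ⟶ (shiftFunctor C (1 : ℤ)).obj A)
      (hT : Triangle.mk f g h ∈ distTriang C)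
      (hA : BuildVal E t A r) :
      BuildVal E t B (r + Real.exp ((n : ℝ) * t))

/-- The set of weights `∑ᵢ exp(nᵢ t)` of towers of distinguished triangles with cones
shifts of `E`, ending at an object isomorphic to `F ⊕ F'` for some `F'`. -/
def complexitySet (E F : C) (t : ℝ) : Set ℝ :=
  {r | ∃ B F' : C, BuildVal C E t B r ∧ Nonempty (B ≅ F ⊞ F')}

/-- The complexity `δ_t(E, F)` of `F` relative to `E` (Dimitrov–Haiden–Katzarkov–Kontsevich). -/
noncomputable def complexity (E F : C) (t : ℝ) : ℝ :=
  sInf (complexitySet C E F t)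

/-- `F` lies in the split closure `⟨E⟩` of `E` (expressed via towers). -/
def InSplitClosure (E F : C) : Prop :=
  (complexitySet C E F 0).Nonempty

/-- `G` is a split generator of the triangulated category. -/
def IsSplitGenerator (G : C) : Prop :=
  ∀ F : C, InSplitClosure C G F

/-- The right orthogonal `E^⊥ = {F : Hom^*(E,F) = 0}`. -/
def rightOrthogonal (E : C) : Set C :=
  {F | ∀ (n : ℤ) (f : E ⟶ (shiftFunctor C n).obj F), f = 0}

/-- A `ℙ^d`-object in a ℂ-linear triangulated category (an abstract model of a `ℙ^d`-object
in `D^b(X)` for `X` smooth projective of dimension `2d` over `ℂ`, in the sense of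
Huybrechts–Thomas): `E` is a `2d`-Calabi–Yau object (the Serre-duality reformulation of
`E ⊗ ω_X ≅ E`) and the graded ring `Hom^*(E,E)` is isomorphic to
`H^*(ℙ^d; ℂ) = ℂ[h]/(h^{d+1})`, `deg h = 2`: the graded pieces `Hom^{2k}(E,E)`, `0 ≤ k ≤ d`,
are one-dimensional, spanned by the powers `h^k`, and all other graded pieces vanish. -/
structure PdObject (d : ℕ) where
  E : C
  nonzero : ¬ IsZero E
  /-- Serre-duality form of `E ⊗ ω_X ≅ E` on a `2d`-dimensional variety:
  `Hom(E, F) ≅ Hom(F, E[2d])^∨` for every `F`. -/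
  CY : ∀ F : C, (E ⟶ F) ≃ₗ[ℂ] Module.Dual ℂ (F ⟶ (shiftFunctor C (2 * (d : ℤ))).obj E)
  /-- a generator `h ∈ Hom²(E, E)`. -/
  h : E ⟶ (shiftFunctor C (2 : ℤ)).obj E
  /-- the powers `h^k ∈ Hom^{2k}(E, E)` of `h`. -/
  hpow : ∀ k : ℕ, (E ⟶ (shiftFunctor C (2 * (k : ℤ))).obj E)
  hpow_zero : hpow 0 = (shiftFunctorZero' C (2 * ((0 : ℕ) : ℤ)) (by simp)).inv.app E
  hpow_succ : ∀ k : ℕ,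
    hpow (k + 1) = h ≫ (shiftFunctor C (2 : ℤ)).map (hpow k) ≫
      (shiftFunctorAdd' C (2 * (k : ℤ)) (2 : ℤ) (2 * ((k + 1 : ℕ) : ℤ))
        (by push_cast; ring)).inv.app E
  /-- `Hom^{2k}(E,E)` is one-dimensional for `0 ≤ k ≤ d`. -/
  hom_rank_one : ∀ k : ℕ, k ≤ d →
    Module.finrank ℂ (E ⟶ (shiftFunctor C (2 * (k : ℤ))).obj E) = 1
  /-- all other graded pieces of `Hom^*(E,E)` vanish. -/
  hom_rank_zero : ∀ n : ℤ, (¬ ∃ k : ℕ, k ≤ d ∧ n = 2 * (k : ℤ)) →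
    ∀ f : E ⟶ (shiftFunctor C n).obj E, f = 0
  /-- the powers `h^k`, `k ≤ d`, are nonzero (so they span the graded pieces). -/
  hpow_ne_zero : ∀ k : ℕ, k ≤ d → hpow k ≠ 0

/-- The `ℙ^d`-twist `P_E` associated to a `ℙ^d`-object `E` (Huybrechts–Thomas):
an autoequivalence `P` such that each `P(F)` is obtained by the double cone construction
`P(F) = Cone(Cone(Hom^{*-2}(E,F) ⊗ E → Hom^*(E,F) ⊗ E) → F)`.
Here `H F` models the object `Hom^*(E,F) ⊗ E`, i.e. the finite direct sum of shifts
`E[-n]` with multiplicity `dim Hom^n(E,F)`, so that `Hom^{*-2}(E,F) ⊗ E = (H F)[-2]`;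
`θ F` models the map `h^∨·id − id·h`; `T F` models its cone; and `P F` is the cone of
the induced evaluation map `T F → F`. -/
structure PdTwist (d : ℕ) extends PdObject C d where
  /-- the twist autoequivalence. -/
  P : C ≌ C
  /-- the twist commutes with the shift functors. -/
  commShift : P.functor.CommShift ℤ
  /-- `H F` models `Hom^*(E,F) ⊗ E`. -/
  H : C → C
  /-- `H F` is a finite direct sum of shifts `E[-n]`, with multiplicity
  `dim_ℂ Hom^n(E,F)` for each `n`. -/
  H_iso : ∀ F : C, ∃ (k : ℕ) (ns : Fin k → ℤ),
    Nonempty (H F ≅ biproduct (fun i => (shiftFunctor C (ns i)).obj E)) ∧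
    ∀ n : ℤ, (Finset.univ.filter fun i => ns i = -n).card
        = Module.finrank ℂ (E ⟶ (shiftFunctor C n).obj F)
  /-- the map `h^∨·id − id·h : Hom^{*-2}(E,F) ⊗ E → Hom^*(E,F) ⊗ E`. -/
  θ : ∀ F : C, (shiftFunctor C (-2 : ℤ)).obj (H F) ⟶ H F
  /-- the inner cone `T F = Cone(θ F)`. -/
  T : C → C
  ι : ∀ F : C, H F ⟶ T F
  π : ∀ F : C, T F ⟶ (shiftFunctor C (1 : ℤ)).obj ((shiftFunctor C (-2 : ℤ)).obj (H F))
  innerTri : ∀ F : C, Triangle.mk (θ F) (ι F) (π F) ∈ distTriang C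
  /-- the map `T F → F` induced by the evaluation `Hom^*(E,F) ⊗ E → F`. -/
  ev : ∀ F : C, T F ⟶ F
  η : ∀ F : C, F ⟶ P.functor.obj F
  dl : ∀ F : C, P.functor.obj F ⟶ (shiftFunctor C (1 : ℤ)).obj (T F)
  /-- `P F = Cone(T F → F)`. -/
  outerTri : ∀ F : C, Triangle.mk (ev F) (η F) (dl F) ∈ distTriang C

section Helpers

set_option linter.unusedSectionVars false

variable {C}

/-- `F` is a retract of an object with a tower of weight `r`. -/
def RetVal (G : C) (t : ℝ) (F : C) (r : ℝ) : Prop :=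
  ∃ (B : C) (i : F ⟶ B) (p : B ⟶ F), BuildVal C G t B r ∧ i ≫ p = 𝟙 F

lemma BuildVal.nonneg {G : C} {t : ℝ} {B : C} {r : ℝ} (h : BuildVal C G t B r) : 0 ≤ r := by
  induction h with
  | zero => exact le_refl _
  | step A B n r f g h hT hA ih => positivity

lemma BuildVal.of_iso {G : C} {t : ℝ} {B B' : C} {r : ℝ} (h : BuildVal C G t B r) (e : B ≅ B') :
    BuildVal C G t B' r := by
  cases h with
  | zero _ hZ => exact BuildVal.zero _ (hZ.of_iso e.symm)
  | step A _ n r f g h hT hA =>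
    refine BuildVal.step A B' n r (f ≫ e.hom) (e.inv ≫ g) h ?_ hA
    refine isomorphic_distinguished _ hT _ ?_
    exact Triangle.isoMk _ _ (Iso.refl _) e.symm (Iso.refl _)
      (by change (f ≫ e.hom) ≫ e.inv = 𝟙 A ≫ f; simp)
      (by change (e.inv ≫ g) ≫ 𝟙 _ = e.inv ≫ g; simp)
      (by change h ≫ (shiftFunctor C (1 : ℤ)).map (𝟙 A) = 𝟙 _ ≫ h; simp)

lemma BuildVal.of_triangle {G : C} {t : ℝ} {r : ℝ} (T : Triangle C) (hT : T ∈ distTriang C)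
    (h : BuildVal C G t T.obj₁ r) (n : ℤ) (e : T.obj₃ ≅ (shiftFunctor C n).obj G) :
    BuildVal C G t T.obj₂ (r + Real.exp ((n : ℝ) * t)) := by
  refine BuildVal.step T.obj₁ T.obj₂ n r T.mor₁ (T.mor₂ ≫ e.hom) (e.inv ≫ T.mor₃) ?_ h
  refine isomorphic_distinguished _ hT _ ?_
  exact Triangle.isoMk _ _ (Iso.refl _) (Iso.refl _) e.symm
    (by change T.mor₁ ≫ 𝟙 _ = 𝟙 _ ≫ T.mor₁; simp)
    (by change (T.mor₂ ≫ e.hom) ≫ e.inv = 𝟙 _ ≫ T.mor₂; simp)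
    (by change (e.inv ≫ T.mor₃) ≫ (shiftFunctor C (1 : ℤ)).map (𝟙 _) = e.inv ≫ T.mor₃; simp)

lemma BuildVal.change {G : C} {t : ℝ} {B : C} {r : ℝ} (h : BuildVal C G t B r) (t' : ℝ) :
    ∃ r', BuildVal C G t' B r' := by
  induction h with
  | zero Z hZ => exact ⟨0, BuildVal.zero Z hZ⟩
  | step A B n r f g h hT hA ih =>
    obtain ⟨r', h'⟩ := ih
    exact ⟨_, BuildVal.step A B n r' f g h hT h'⟩

lemma BuildVal.shift {G : C} {t : ℝ} {B : C} {r : ℝ} (h : BuildVal C G t B r) (m : ℤ) :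
    BuildVal C G t ((shiftFunctor C m).obj B) (Real.exp ((m : ℝ) * t) * r) := by
  induction h with
  | zero Z hZ => rw [mul_zero]; exact BuildVal.zero _ ((shiftFunctor C m).map_isZero hZ)
  | step A B n r f g h hT hA ih =>
    have := BuildVal.of_triangle (t := t) _ (Triangle.shift_distinguished _ hT m) ih (n + m)
      ((shiftFunctorAdd C n m).symm.app G)
    have hw : Real.exp ((m : ℝ) * t) * (r + Real.exp ((n : ℝ) * t)) =
        Real.exp ((m : ℝ) * t) * r + Real.exp (((n + m : ℤ) : ℝ) * t) := by
      rw [mul_add, ← Real.exp_add]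
      push_cast
      ring_nf
    rw [hw]
    exact this

lemma retVal_of_mem {G : C} {t : ℝ} {F : C} {r : ℝ} (h : r ∈ complexitySet C G F t) :
    RetVal G t F r := by
  obtain ⟨B, F', hB, ⟨e⟩⟩ := h
  exact ⟨B, biprod.inl ≫ e.inv, e.hom ≫ biprod.fst, hB, by simp⟩

lemma mem_of_retVal {G : C} {t : ℝ} {F : C} {r : ℝ} (h : RetVal G t F r) :
    r ∈ complexitySet C G F t := by
  obtain ⟨B, i, p, hB, hip⟩ := h
  obtain ⟨Z, f, g, hT⟩ := distinguished_cocone_triangle i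
  have : Mono i := by
    have : IsSplitMono i := ⟨⟨p, hip⟩⟩
    infer_instance
  obtain ⟨e, -, -⟩ := exists_iso_binaryBiproduct_of_distTriang _ hT
    (Triangle.mor₃_eq_zero_of_mono₁ _ hT this)
  exact ⟨B, Z, hB, ⟨e⟩⟩

lemma RetVal.nonneg {G : C} {t : ℝ} {F : C} {r : ℝ} (h : RetVal G t F r) : 0 ≤ r := by
  obtain ⟨B, i, p, hB, hip⟩ := h
  exact hB.nonneg

lemma RetVal.complexity_le {G : C} {t : ℝ} {F : C} {r : ℝ} (h : RetVal G t F r) :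
    complexity C G F t ≤ r :=
  csInf_le ⟨0, fun _ hx => (retVal_of_mem hx).nonneg⟩ (mem_of_retVal h)

lemma RetVal.of_retract {G : C} {t : ℝ} {F F' : C} {r : ℝ} (h : RetVal G t F r)
    (i : F' ⟶ F) (p : F ⟶ F') (hip : i ≫ p = 𝟙 F') : RetVal G t F' r := by
  obtain ⟨B, i', p', hB, hip'⟩ := h
  exact ⟨B, i ≫ i', p' ≫ p, hB, by rw [Category.assoc, reassoc_of% hip', hip]⟩

lemma RetVal.of_iso {G : C} {t : ℝ} {F F' : C} {r : ℝ} (h : RetVal G t F r) (e : F ≅ F') :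
    RetVal G t F' r := h.of_retract e.inv e.hom (by simp)

lemma RetVal.shift {G : C} {t : ℝ} {F : C} {r : ℝ} (h : RetVal G t F r) (m : ℤ) :
    RetVal G t ((shiftFunctor C m).obj F) (Real.exp ((m : ℝ) * t) * r) := by
  obtain ⟨B, i, p, hB, hip⟩ := h
  exact ⟨_, (shiftFunctor C m).map i, (shiftFunctor C m).map p, hB.shift m, by
    rw [← Functor.map_comp, hip, CategoryTheory.Functor.map_id]⟩

lemma coy₂ {A B D X : C} {f : A ⟶ B} {g : B ⟶ D} {h : D ⟶ A⟦(1 : ℤ)⟧}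
    (hT : Triangle.mk f g h ∈ distTriang C) (x : X ⟶ B) (hx : x ≫ g = 0) :
    ∃ y : X ⟶ A, x = y ≫ f :=
  Triangle.coyoneda_exact₂ _ hT x hx

lemma coy₃ {A B D X : C} {f : A ⟶ B} {g : B ⟶ D} {h : D ⟶ A⟦(1 : ℤ)⟧}
    (hT : Triangle.mk f g h ∈ distTriang C) (x : X ⟶ D) (hx : x ≫ h = 0) :
    ∃ y : X ⟶ B, x = y ≫ g :=
  Triangle.coyoneda_exact₃ _ hT x hx

lemma yon₂ {A B D X : C} {f : A ⟶ B} {g : B ⟶ D} {h : D ⟶ A⟦(1 : ℤ)⟧}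
    (hT : Triangle.mk f g h ∈ distTriang C) (x : B ⟶ X) (hx : f ≫ x = 0) :
    ∃ y : D ⟶ X, x = g ≫ y :=
  Triangle.yoneda_exact₂ _ hT x hx

lemma yon₃ {A B D X : C} {f : A ⟶ B} {g : B ⟶ D} {h : D ⟶ A⟦(1 : ℤ)⟧}
    (hT : Triangle.mk f g h ∈ distTriang C) (x : D ⟶ X) (hx : g ≫ x = 0) :
    ∃ y : A⟦(1 : ℤ)⟧ ⟶ X, x = h ≫ y :=
  Triangle.yoneda_exact₃ _ hT x hx

lemma tri_rot {A B D : C} {f : A ⟶ B} {g : B ⟶ D} {h : D ⟶ A⟦(1 : ℤ)⟧}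
    (hT : Triangle.mk f g h ∈ distTriang C) :
    Triangle.mk g h (-f⟦(1 : ℤ)⟧') ∈ distTriang C :=
  rot_of_distTriang _ hT

lemma compl₂ {A B D A' B' D' : C} {f : A ⟶ B} {g : B ⟶ D} {h : D ⟶ A⟦(1 : ℤ)⟧}
    (hT : Triangle.mk f g h ∈ distTriang C)
    {f' : A' ⟶ B'} {g' : B' ⟶ D'} {h' : D' ⟶ A'⟦(1 : ℤ)⟧}
    (hT' : Triangle.mk f' g' h' ∈ distTriang C)
    (a : A ⟶ A') (c : D ⟶ D') (comm : h ≫ a⟦(1 : ℤ)⟧' = c ≫ h') :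
    ∃ b : B ⟶ B', f ≫ b = a ≫ f' ∧ g ≫ c = b ≫ g' :=
  complete_distinguished_triangle_morphism₂ _ _ hT hT' a c comm

lemma compl₃ {A B D A' B' D' : C} {f : A ⟶ B} {g : B ⟶ D} {h : D ⟶ A⟦(1 : ℤ)⟧}
    (hT : Triangle.mk f g h ∈ distTriang C)
    {f' : A' ⟶ B'} {g' : B' ⟶ D'} {h' : D' ⟶ A'⟦(1 : ℤ)⟧}
    (hT' : Triangle.mk f' g' h' ∈ distTriang C)
    (a : A ⟶ A') (b : B ⟶ B') (comm : f ≫ b = a ≫ f') :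
    ∃ c : D ⟶ D', g ≫ c = b ≫ g' ∧ h ≫ a⟦(1 : ℤ)⟧' = c ≫ h' :=
  complete_distinguished_triangle_morphism _ _ hT hT' a b comm

lemma tri_iso₂ {A B D : C} {f : A ⟶ B} {g : B ⟶ D} {h : D ⟶ A⟦(1 : ℤ)⟧}
    (hT : Triangle.mk f g h ∈ distTriang C) (b : B ⟶ B) (h1 : f ≫ b = f) (h2 : b ≫ g = g) :
    IsIso b := by
  let φ : Triangle.mk f g h ⟶ Triangle.mk f g h :=
    { hom₁ := 𝟙 A, hom₂ := b, hom₃ := 𝟙 D,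
      comm₁ := by change f ≫ b = 𝟙 A ≫ f; rw [h1, Category.id_comp]
      comm₂ := by change g ≫ 𝟙 D = b ≫ g; rw [h2, Category.comp_id]
      comm₃ := by change h ≫ (shiftFunctor C (1 : ℤ)).map (𝟙 A) = 𝟙 D ≫ h; simp }
  exact isIso₂_of_isIso₁₃ φ hT hT (by change IsIso (𝟙 A); infer_instance)
    (by change IsIso (𝟙 D); infer_instance)

lemma tri_iso₃ {A B D : C} {f : A ⟶ B} {g : B ⟶ D} {h : D ⟶ A⟦(1 : ℤ)⟧}
    (hT : Triangle.mk f g h ∈ distTriang C) (b : D ⟶ D) (h1 : g ≫ b = g) (h2 : b ≫ h = h) :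
    IsIso b := by
  let φ : Triangle.mk f g h ⟶ Triangle.mk f g h :=
    { hom₁ := 𝟙 A, hom₂ := 𝟙 B, hom₃ := b,
      comm₁ := by change f ≫ 𝟙 B = 𝟙 A ≫ f; simp
      comm₂ := by change g ≫ b = 𝟙 B ≫ g; rw [h1, Category.id_comp]
      comm₃ := by
        change h ≫ (shiftFunctor C (1 : ℤ)).map (𝟙 A) = b ≫ h
        rw [h2, CategoryTheory.Functor.map_id, Category.comp_id] }
  exact isIso₃_of_isIso₁₂ φ hT hT (by change IsIso (𝟙 A); infer_instance)
    (by change IsIso (𝟙 B); infer_instance)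

lemma retract_of_isIso {B B' : C} (i : B ⟶ B') (p : B' ⟶ B) (h : IsIso (i ≫ p)) :
    ∃ (i : B ⟶ B') (p : B' ⟶ B), i ≫ p = 𝟙 B :=
  ⟨i, p ≫ inv (i ≫ p), by rw [← Category.assoc]; exact IsIso.hom_inv_id _⟩

/-- retracts of cones: retract on the second object. -/
lemma cone_retract₂ {U V V' B B' : C} {x : U ⟶ V} {y : V ⟶ B} {z : B ⟶ U⟦(1 : ℤ)⟧}
    (hT : Triangle.mk x y z ∈ distTriang C) (s : V ⟶ V') (q : V' ⟶ V) (hsq : s ≫ q = 𝟙 V)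
    {y' : V' ⟶ B'} {z' : B' ⟶ U⟦(1 : ℤ)⟧}
    (hT' : Triangle.mk (x ≫ s) y' z' ∈ distTriang C) :
    ∃ (i : B ⟶ B') (p : B' ⟶ B), i ≫ p = 𝟙 B := by
  obtain ⟨c, h1, h2⟩ := compl₃ hT hT' (𝟙 U) s (by simp)
  obtain ⟨c', h1', h2'⟩ := compl₃ hT' hT (𝟙 U) q (by rw [Category.assoc, hsq]; simp)
  rw [CategoryTheory.Functor.map_id, Category.comp_id] at h2 h2'
  refine retract_of_isIso c c' (tri_iso₃ hT _ ?_ ?_)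
  · rw [reassoc_of% h1, h1', reassoc_of% hsq]
  · rw [Category.assoc, ← h2', ← h2]

/-- retracts of cocones: retract on the third object. -/
lemma cone_retract₃ {A B D D' B' : C} {x : A ⟶ B} {y : B ⟶ D} {w : D ⟶ A⟦(1 : ℤ)⟧}
    (hT : Triangle.mk x y w ∈ distTriang C) (s : D ⟶ D') (q : D' ⟶ D) (hsq : s ≫ q = 𝟙 D)
    {x' : A ⟶ B'} {y' : B' ⟶ D'}
    (hT' : Triangle.mk x' y' (q ≫ w) ∈ distTriang C) :
    ∃ (i : B ⟶ B') (p : B' ⟶ B), i ≫ p = 𝟙 B := by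
  obtain ⟨b, h1, h2⟩ := compl₂ hT hT' (𝟙 A) s (by rw [reassoc_of% hsq]; simp)
  obtain ⟨b', h1', h2'⟩ := compl₂ hT' hT (𝟙 A) q (by simp)
  rw [Category.id_comp] at h1 h1'
  refine retract_of_isIso b b' (tri_iso₂ hT _ ?_ ?_)
  · rw [reassoc_of% h1, h1']
  · rw [Category.assoc, ← h2', ← reassoc_of% h2, hsq, Category.comp_id]

/-- A weak form of the octahedron, up to a direct summand, valid in every
pretriangulated category. -/
lemma weak_octahedron {A B D D₁ Q : C} {a : A ⟶ B} {b : B ⟶ D} {w : D ⟶ A⟦(1 : ℤ)⟧}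
    (hT : Triangle.mk a b w ∈ distTriang C)
    {f : D₁ ⟶ D} {g : D ⟶ Q} {h : Q ⟶ D₁⟦(1 : ℤ)⟧}
    (hD : Triangle.mk f g h ∈ distTriang C)
    {X : C} {a' : A ⟶ X} {b' : X ⟶ D₁} (hX : Triangle.mk a' b' (f ≫ w) ∈ distTriang C)
    {X₁ : C} {i : X₁ ⟶ B} {k : Q ⟶ X₁⟦(1 : ℤ)⟧}
    (hX₁ : Triangle.mk i (b ≫ g) k ∈ distTriang C) :
    ∃ (s : X₁ ⟶ X ⊞ Q⟦(-1 : ℤ)⟧) (q : X ⊞ Q⟦(-1 : ℤ)⟧ ⟶ X₁), s ≫ q = 𝟙 X₁ := by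
  obtain ⟨c, hc1, hc2⟩ := compl₂ hX hT (𝟙 A) f (by simp)
  rw [Category.id_comp] at hc1
  have hfg : f ≫ g = 0 := comp_distTriang_mor_zero₁₂ _ hD
  have hbw : b ≫ w = 0 := comp_distTriang_mor_zero₂₃ _ hT
  have hibg : i ≫ b ≫ g = 0 := comp_distTriang_mor_zero₁₂ _ hX₁
  obtain ⟨c', hc'⟩ := coy₂ hX₁ c (by
    rw [← Category.assoc, ← hc2, Category.assoc, hfg, comp_zero])
  obtain ⟨z, hz⟩ := coy₂ hD (i ≫ b) (by rw [Category.assoc, hibg])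
  obtain ⟨x, hx⟩ := coy₃ hX z (by
    rw [← Category.assoc, ← hz, Category.assoc, hbw, comp_zero])
  obtain ⟨φ, hφ⟩ := coy₂ hT (x ≫ c - i) (by
    rw [Preadditive.sub_comp, Category.assoc, ← hc2, hz, hx, Category.assoc, sub_self])
  have hu : (x - φ ≫ a') ≫ c' ≫ i = i := by
    rw [← hc', Preadditive.sub_comp, Category.assoc, hc1, ← hφ, sub_sub_cancel]
  obtain ⟨m, hm⟩ : ∃ m : Q⟦(-1 : ℤ)⟧ ⟶ X₁, ∀ (y : X₁ ⟶ X₁), y ≫ i = 0 → ∃ v, y = v ≫ m :=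
    ⟨_, fun y hy => Triangle.coyoneda_exact₂ _ (inv_rot_of_distTriang _ hX₁) y hy⟩
  obtain ⟨v, hv⟩ := hm (𝟙 X₁ - (x - φ ≫ a') ≫ c') (by
    rw [Preadditive.sub_comp, Category.assoc, hu, Category.id_comp, sub_self])
  refine ⟨biprod.lift (x - φ ≫ a') v, biprod.desc c' m, ?_⟩
  rw [biprod.lift_desc, ← hv]
  abel

lemma retVal_triangle_aux {G : C} {t : ℝ} {D : C} {s : ℝ} (hD : BuildVal C G t D s) :
    ∀ {A B : C} {r : ℝ} (a : A ⟶ B) (b : B ⟶ D) (w : D ⟶ A⟦(1 : ℤ)⟧)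
      (_ : Triangle.mk a b w ∈ distTriang C) (_ : RetVal G t A r),
      RetVal G t B (r + (1 + Real.exp (-t)) * s) := by
  induction hD with
  | zero Z hZ =>
    intro A B r a b w hT hA
    have : IsIso a := (Triangle.isZero₃_iff_isIso₁ _ hT).1 hZ
    rw [mul_zero, add_zero]
    exact hA.of_iso (asIso a)
  | step D₁ D n s f g h hD hD₁ ih =>
    intro A B r a b w hT hA
    obtain ⟨X, a', b', hX⟩ := distinguished_cocone_triangle₂ (f ≫ w)
    obtain ⟨X₁, i, k, hX₁⟩ := distinguished_cocone_triangle₁ (b ≫ g)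
    obtain ⟨s₁, q₁, hsq₁⟩ := weak_octahedron hT hD hX hX₁
    obtain ⟨Y, iY, pY, hY, hipY⟩ := ih a' b' (f ≫ w) hX hA
    let e1 : ((shiftFunctor C n).obj G)⟦(-1 : ℤ)⟧ ≅ (shiftFunctor C (n + -1)).obj G :=
      (shiftFunctorAdd C n (-1)).symm.app G
    have hZ := BuildVal.of_triangle (t := t) _
      (binaryBiproductTriangle_distinguished Y (((shiftFunctor C n).obj G)⟦(-1 : ℤ)⟧))
      hY (n + -1) e1
    have hR := inv_rot_of_distTriang _ hX₁
    let s₂ : X₁ ⟶ Y ⊞ ((shiftFunctor C n).obj G)⟦(-1 : ℤ)⟧ := s₁ ≫ biprod.map iY (𝟙 _)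
    let q₂ : Y ⊞ ((shiftFunctor C n).obj G)⟦(-1 : ℤ)⟧ ⟶ X₁ := biprod.map pY (𝟙 _) ≫ q₁
    have hsq₂ : s₂ ≫ q₂ = 𝟙 X₁ := by
      have : biprod.map iY (𝟙 (((shiftFunctor C n).obj G)⟦(-1 : ℤ)⟧)) ≫ biprod.map pY (𝟙 _)
          = 𝟙 _ := by
        ext <;> simp [hipY]
      simp only [s₂, q₂, Category.assoc, reassoc_of% this, hsq₁]
    obtain ⟨B', y', z', hB'⟩ := distinguished_cocone_triangle
      ((Triangle.mk i (b ≫ g) k).invRotate.mor₁ ≫ s₂)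
    obtain ⟨i', p', hip'⟩ := cone_retract₂ (x := (Triangle.mk i (b ≫ g) k).invRotate.mor₁)
      (y := i) (z := (Triangle.mk i (b ≫ g) k).invRotate.mor₃) hR s₂ q₂ hsq₂ hB'
    have hfin := BuildVal.of_triangle (t := t) _ (rot_of_distTriang _ hB') hZ n
      ((shiftFunctorCompIsoId C (-1 : ℤ) 1 (by norm_num)).app ((shiftFunctor C n).obj G))
    refine ⟨B', i', p', ?_, hip'⟩
    have hw : r + (1 + Real.exp (-t)) * (s + Real.exp ((n : ℝ) * t)) =
        r + (1 + Real.exp (-t)) * s + Real.exp (((n + -1 : ℤ) : ℝ) * t) +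
          Real.exp ((n : ℝ) * t) := by
      have : Real.exp ((n + -1 : ℤ) * t) = Real.exp (-t) * Real.exp (n * t) := by
        rw [← Real.exp_add]; push_cast; ring_nf
      rw [this]
      ring
    rw [hw]
    exact hfin

/-- The triangle inequality (up to a constant), without the octahedron. -/
lemma RetVal.triangle {G : C} {t : ℝ} {A B D : C} {r s : ℝ} {a : A ⟶ B} {b : B ⟶ D}
    {w : D ⟶ A⟦(1 : ℤ)⟧} (hT : Triangle.mk a b w ∈ distTriang C)
    (hA : RetVal G t A r) (hD : RetVal G t D s) :
    RetVal G t B (r + (1 + Real.exp (-t)) * s) := by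
  obtain ⟨D', i, p, hD', hip⟩ := hD
  obtain ⟨B', a', b', hB'⟩ := distinguished_cocone_triangle₂ (p ≫ w)
  obtain ⟨i', p', hip'⟩ := cone_retract₃ hT i p hip hB'
  exact (retVal_triangle_aux hD' a' b' _ hB' hA).of_retract i' p' hip'

lemma retVal_biprod {G : C} {t : ℝ} {A D : C} {r s : ℝ}
    (hA : RetVal G t A r) (hD : RetVal G t D s) :
    RetVal G t (A ⊞ D) (r + (1 + Real.exp (-t)) * s) :=
  RetVal.triangle (binaryBiproductTriangle_distinguished A D) hA hD

lemma retVal_biproduct {G E : C} {t δ : ℝ} (hE : RetVal G t E δ) :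
    ∀ (k : ℕ) (ns : Fin k → ℤ),
      RetVal G t (biproduct (fun i => (shiftFunctor C (ns i)).obj E))
        ((1 + Real.exp (-t)) * δ * ∑ i, Real.exp ((ns i : ℝ) * t)) := by
  intro k
  induction k with
  | zero =>
    intro ns
    refine ⟨_, 𝟙 _, 𝟙 _, ?_, by simp⟩
    simp only [Finset.univ_eq_empty, Finset.sum_empty, mul_zero]
    apply BuildVal.zero
    rw [IsZero.iff_id_eq_zero]
    ext i
    exact i.elim0
  | succ k ih =>
    intro ns
    have h := retVal_biprod (ih (fun i => ns i.succ)) (hE.shift (ns 0))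
    have h' := h.of_retract (F' := biproduct (fun i => (shiftFunctor C (ns i)).obj E))
      (biprod.lift (biproduct.lift fun i => biproduct.π _ i.succ) (biproduct.π _ 0))
      (biprod.desc (biproduct.desc fun i => biproduct.ι
        (fun i => (shiftFunctor C (ns i)).obj E) i.succ)
        (biproduct.ι (fun i => (shiftFunctor C (ns i)).obj E) 0)) (by
        rw [biprod.lift_desc, biproduct.lift_desc, ← biproduct.total, Fin.sum_univ_succ]
        exact add_comm _ _)
    convert h' using 1
    rw [Fin.sum_univ_succ]
    ring


/-! ### Shifted exactness -/

lemma shift_coy₃ {A B D X : C} {f : A ⟶ B} {g : B ⟶ D} {h : D ⟶ A⟦(1 : ℤ)⟧}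
    (hT : Triangle.mk f g h ∈ distTriang C) (n : ℤ) (x : X ⟶ D⟦n⟧) (hx : x ≫ h⟦n⟧' = 0) :
    ∃ y : X ⟶ B⟦n⟧, x = y ≫ g⟦n⟧' := by
  let e : X⟦-n⟧⟦n⟧ ≅ X := (shiftFunctorCompIsoId C (-n) n (by simp)).app X
  obtain ⟨x0, hx0⟩ := (shiftFunctor C n).map_surjective (e.hom ≫ x)
  have h0 : x0 ≫ h = 0 := by
    apply (shiftFunctor C n).map_injective
    rw [Functor.map_comp, hx0, Category.assoc, hx, comp_zero, Functor.map_zero]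
  obtain ⟨y0, hy0⟩ := coy₃ hT x0 h0
  refine ⟨e.inv ≫ y0⟦n⟧', ?_⟩
  rw [Category.assoc, ← Functor.map_comp, ← hy0, hx0, Iso.inv_hom_id_assoc]

lemma shift_coy₁ {A B D X : C} {f : A ⟶ B} {g : B ⟶ D} {h : D ⟶ A⟦(1 : ℤ)⟧}
    (hT : Triangle.mk f g h ∈ distTriang C) (n : ℤ) (x : X ⟶ A⟦(1 : ℤ)⟧⟦n⟧)
    (hx : x ≫ f⟦(1 : ℤ)⟧'⟦n⟧' = 0) :
    ∃ y : X ⟶ D⟦n⟧, x = y ≫ h⟦n⟧' := by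
  refine shift_coy₃ (rot_of_distTriang _ hT) n x ?_
  change x ≫ (-f⟦(1 : ℤ)⟧')⟦n⟧' = 0
  rw [Functor.map_neg, Preadditive.comp_neg, hx, neg_zero]

/-- All morphisms `X ⟶ Y⟦n⟧` vanish. -/
def Van (X Y : C) (n : ℤ) : Prop := ∀ φ : X ⟶ Y⟦n⟧, φ = 0

lemma Van.zero_of {X Y : C} {n : ℤ} (h : Van X Y n) {a b : ℤ} (hn : n + a = b)
    (φ : X⟦a⟧ ⟶ Y⟦b⟧) : φ = 0 := by
  let e : Y⟦b⟧ ≅ Y⟦n⟧⟦a⟧ := (shiftFunctorAdd' C n a b hn).app Y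
  obtain ⟨ψ, hψ⟩ := (shiftFunctor C a).map_surjective (φ ≫ e.hom)
  rw [← cancel_mono e.hom, ← hψ, h ψ, Functor.map_zero, zero_comp]

lemma van_iso {X Y Y' : C} (h : ∀ φ : X ⟶ Y, φ = 0) (e : Y' ≅ Y) (φ : X ⟶ Y') : φ = 0 := by
  rw [← cancel_mono e.hom, h (φ ≫ e.hom), zero_comp]

lemma van_iso' {X X' Y : C} (h : ∀ φ : X ⟶ Y, φ = 0) (e : X ≅ X') (φ : X' ⟶ Y) : φ = 0 := by
  rw [← cancel_epi e.hom, h (e.hom ≫ φ), comp_zero]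

lemma van_biproduct {k : ℕ} (f : Fin k → C) (n : ℤ) {Y : C}
    (h : ∀ i, ∀ φ : (f i)⟦n⟧ ⟶ Y, φ = 0) (φ : (biproduct f)⟦n⟧ ⟶ Y) : φ = 0 := by
  have h1 : 𝟙 ((biproduct f)⟦n⟧) = ∑ i, (biproduct.π f i)⟦n⟧' ≫ (biproduct.ι f i)⟦n⟧' := by
    rw [← CategoryTheory.Functor.map_id, ← biproduct.total, Functor.map_sum]
    simp only [Functor.map_comp]
  rw [← Category.id_comp φ, h1, Preadditive.sum_comp]
  refine Finset.sum_eq_zero fun i _ => ?_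
  rw [Category.assoc, h i ((biproduct.ι f i)⟦n⟧' ≫ φ), comp_zero]

/-! ### Dimension counts -/

lemma finrank_hom_iso (E : C) {X Y : C} (e : X ≅ Y) :
    Module.finrank ℂ (E ⟶ X) = Module.finrank ℂ (E ⟶ Y) :=
  LinearEquiv.finrank_eq (CategoryTheory.Linear.homCongr ℂ (Iso.refl E) e)

lemma finrank_hom_biproduct (E : C) {k : ℕ} (f : Fin k → C) :
    Module.finrank ℂ (E ⟶ biproduct f) = ∑ i, Module.finrank ℂ (E ⟶ f i) := by
  have e : (E ⟶ biproduct f) ≃ₗ[ℂ] (∀ i, E ⟶ f i) :=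
    { toFun := fun φ i => φ ≫ biproduct.π f i
      invFun := fun φ => biproduct.lift φ
      map_add' := fun x y => by ext i; simp
      map_smul' := fun c x => by ext i; simp
      left_inv := fun x => by ext i; simp
      right_inv := fun x => by ext i; simp }
  rw [e.finrank_eq, Module.finrank_pi_fintype]

lemma finrank_hom_shift_biproduct (E : C) {H : C} {k : ℕ} (ns : Fin k → ℤ)
    (e : H ≅ biproduct (fun i => (shiftFunctor C (ns i)).obj E)) (m : ℤ) :
    Module.finrank ℂ (E ⟶ H⟦m⟧) = ∑ i, Module.finrank ℂ (E ⟶ E⟦ns i + m⟧) := by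
  have e1 : H⟦m⟧ ≅ biproduct (fun i => (shiftFunctor C m).obj ((shiftFunctor C (ns i)).obj E)) :=
    (shiftFunctor C m).mapIso e ≪≫ (shiftFunctor C m).mapBiproduct _
  rw [finrank_hom_iso E e1, finrank_hom_biproduct]
  refine Finset.sum_congr rfl fun i _ => ?_
  exact finrank_hom_iso E ((shiftFunctorAdd C (ns i) m).symm.app E)

variable {d : ℕ}

lemma end_scalar (o : PdObject C d) (f : o.E ⟶ o.E) : ∃ c : ℂ, f = c • 𝟙 o.E := by
  have h1 := o.hom_rank_one 0 (Nat.zero_le d)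
  rw [finrank_hom_iso o.E ((shiftFunctorZero' C (2 * ((0 : ℕ) : ℤ)) (by simp)).app o.E)] at h1
  have h2 : 𝟙 o.E ≠ 0 := fun h => o.nonzero ((IsZero.iff_id_eq_zero _).2 h)
  obtain ⟨c, hc⟩ := (finrank_eq_one_iff_of_nonzero' (𝟙 o.E) h2).1 h1 f
  exact ⟨c, hc.symm⟩

lemma end_isIso (o : PdObject C d) (f : o.E ⟶ o.E) (hf : f ≠ 0) : IsIso f := by
  obtain ⟨c, rfl⟩ := end_scalar o f
  have hc : c ≠ 0 := fun h => hf (by rw [h, zero_smul])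
  exact ⟨c⁻¹ • 𝟙 _, by simp [smul_smul, hc], by simp [smul_smul, hc]⟩

lemma end_isIso_functor (o : PdObject C d) (F : C ⥤ C) [F.Full] [F.Faithful]
    [F.PreservesZeroMorphisms]
    (f : F.obj o.E ⟶ F.obj o.E) (hf : f ≠ 0) : IsIso f := by
  obtain ⟨f, rfl⟩ := F.map_surjective f
  have := end_isIso o f (fun h => hf (by rw [h, Functor.map_zero]))
  infer_instance

lemma end_isIso_of_iso {X Y : C} (h : ∀ f : X ⟶ X, f ≠ 0 → IsIso f) (e : Y ≅ X)
    (f : Y ⟶ Y) (hf : f ≠ 0) : IsIso f := by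
  have := h (e.inv ≫ f ≫ e.hom) (fun h0 => hf (by
    rw [← cancel_epi e.inv, ← cancel_mono e.hom, Category.assoc, h0, comp_zero, zero_comp]))
  have h2 : f = e.hom ≫ (e.inv ≫ f ≫ e.hom) ≫ e.inv := by simp
  rw [h2]
  infer_instance

lemma van_E (o : PdObject C d) {n : ℤ} (h : ¬ ∃ k : ℕ, k ≤ d ∧ n = 2 * (k : ℤ)) :
    Van o.E o.E n := o.hom_rank_zero n h

lemma finrank_zero (o : PdObject C d) {n : ℤ} (h : ¬ ∃ k : ℕ, k ≤ d ∧ n = 2 * (k : ℤ)) :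
    Module.finrank ℂ (o.E ⟶ o.E⟦n⟧) = 0 := by
  have : Subsingleton (o.E ⟶ o.E⟦n⟧) :=
    ⟨fun a b => by rw [van_E o h a, van_E o h b]⟩
  exact Module.finrank_zero_of_subsingleton

lemma finrank_one (o : PdObject C d) {n : ℤ} (h : ∃ k : ℕ, k ≤ d ∧ n = 2 * (k : ℤ)) :
    Module.finrank ℂ (o.E ⟶ o.E⟦n⟧) = 1 := by
  obtain ⟨k, hk, rfl⟩ := h
  exact o.hom_rank_one k hk

lemma van_PE (tw : PdTwist C d) {n : ℤ} (h : n < 0) :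
    Van (tw.P.functor.obj tw.E) (tw.P.functor.obj tw.E) n := by
  intro φ
  let _ := tw.commShift
  have : ∀ ψ : tw.P.functor.obj tw.E ⟶ tw.P.functor.obj (tw.E⟦n⟧), ψ = 0 := by
    intro ψ
    obtain ⟨ψ, rfl⟩ := tw.P.functor.map_surjective ψ
    rw [van_E tw.toPdObject (by rintro ⟨k, -, hk⟩; omega) ψ, Functor.map_zero]
  exact van_iso this ((tw.P.functor.commShiftIso n).app tw.E).symm φ

lemma ns_spec (tw : PdTwist C d) {k : ℕ} {ns : Fin k → ℤ}
    (hc : ∀ n : ℤ, (Finset.univ.filter fun i => ns i = -n).card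
        = Module.finrank ℂ (tw.E ⟶ (shiftFunctor C n).obj tw.E)) (i : Fin k) :
    ∃ j : ℕ, j ≤ d ∧ ns i = -(2 * (j : ℤ)) := by
  by_contra hcon
  have h := hc (-ns i)
  rw [finrank_zero tw.toPdObject, Finset.card_eq_zero, Finset.filter_eq_empty_iff] at h
  · exact h (Finset.mem_univ i) (by simp)
  · rintro ⟨j, hj, hj'⟩
    exact hcon ⟨j, hj, by omega⟩

lemma ns_exists (tw : PdTwist C d) {k : ℕ} {ns : Fin k → ℤ}
    (hc : ∀ n : ℤ, (Finset.univ.filter fun i => ns i = -n).card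
        = Module.finrank ℂ (tw.E ⟶ (shiftFunctor C n).obj tw.E)) (j : ℕ) (hj : j ≤ d) :
    ∃ i : Fin k, ns i = -(2 * (j : ℤ)) := by
  have h := hc (2 * (j : ℤ))
  rw [tw.hom_rank_one j hj] at h
  obtain ⟨i, hi⟩ := Finset.card_pos.1 (by rw [h]; exact one_pos)
  exact ⟨i, (Finset.mem_filter.1 hi).2⟩

lemma exists_top (tw : PdTwist C d) : ¬ Van tw.E (tw.P.functor.obj tw.E) (2 * (d : ℤ)) := by
  intro hV
  obtain ⟨k, ns, ⟨e⟩, hc⟩ := tw.H_iso tw.E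
  have hT1 : ∀ x : tw.E ⟶ (tw.T tw.E)⟦(1 : ℤ)⟧⟦2 * (d : ℤ)⟧, x = 0 := by
    intro x
    have h0 : ∀ y : tw.E ⟶ tw.E⟦(1 : ℤ)⟧⟦2 * (d : ℤ)⟧, y = 0 := fun y =>
      van_iso (van_E tw.toPdObject (n := 1 + 2 * (d : ℤ)) (by rintro ⟨k, -, hk⟩; omega))
        ((shiftFunctorAdd C 1 (2 * (d : ℤ))).symm.app tw.E) y
    obtain ⟨y, rfl⟩ := shift_coy₁ (tw.outerTri tw.E) _ x (h0 _)
    rw [hV y, zero_comp]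
  have hT2 : ∀ x : tw.E ⟶ (tw.T tw.E)⟦1 + 2 * (d : ℤ)⟧, x = 0 := fun x =>
    van_iso hT1 ((shiftFunctorAdd C 1 (2 * (d : ℤ))).app (tw.T tw.E)) x
  have hinj : Function.Injective (CategoryTheory.Linear.rightComp ℂ tw.E
      ((tw.θ tw.E)⟦(1 : ℤ)⟧'⟦1 + 2 * (d : ℤ)⟧')) := by
    rw [injective_iff_map_eq_zero]
    intro x hx
    obtain ⟨y, rfl⟩ := shift_coy₁ (tw.innerTri tw.E) _ x hx
    rw [hT2 y, zero_comp]
  have hle := LinearMap.finrank_le_finrank_of_injective hinj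
  have e1 : (tw.H tw.E)⟦(1 : ℤ)⟧⟦1 + 2 * (d : ℤ)⟧ ≅ (tw.H tw.E)⟦2 * (d : ℤ) + 2⟧ :=
    (shiftFunctorAdd' C 1 (1 + 2 * (d : ℤ)) (2 * (d : ℤ) + 2) (by ring)).symm.app _
  have e2 : (tw.H tw.E)⟦(-2 : ℤ)⟧⟦(1 : ℤ)⟧⟦1 + 2 * (d : ℤ)⟧ ≅ (tw.H tw.E)⟦2 * (d : ℤ)⟧ :=
    (shiftFunctorAdd' C 1 (1 + 2 * (d : ℤ)) (2 * (d : ℤ) + 2) (by ring)).symm.app _ ≪≫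
    (shiftFunctorAdd' C (-2) (2 * (d : ℤ) + 2) (2 * (d : ℤ)) (by ring)).symm.app _
  rw [finrank_hom_iso tw.E e1, finrank_hom_iso tw.E e2,
    finrank_hom_shift_biproduct tw.E ns e, finrank_hom_shift_biproduct tw.E ns e] at hle
  refine absurd hle (not_le.2 ?_)
  apply Finset.sum_lt_sum
  · intro i _
    obtain ⟨j, hj, hij⟩ := ns_spec tw hc i
    rw [finrank_one tw.toPdObject (n := ns i + 2 * (d : ℤ)) ⟨d - j, by omega, by omega⟩]
    by_cases h : ∃ k : ℕ, k ≤ d ∧ ns i + (2 * (d : ℤ) + 2) = 2 * (k : ℤ)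
    · rw [finrank_one tw.toPdObject h]
    · rw [finrank_zero tw.toPdObject h]; exact zero_le_one
  · obtain ⟨i, hi⟩ := ns_exists tw hc 0 (Nat.zero_le d)
    refine ⟨i, Finset.mem_univ i, ?_⟩
    rw [finrank_one tw.toPdObject (n := ns i + 2 * (d : ℤ)) ⟨d, le_refl d, by omega⟩,
      finrank_zero tw.toPdObject (by rintro ⟨k, hk, hk'⟩; omega)]
    exact zero_lt_one

lemma exists_min (tw : PdTwist C d) : ∃ a : ℤ, a ≤ 2 * (d : ℤ) ∧
    ¬ Van tw.E (tw.P.functor.obj tw.E) a ∧ ∀ b < a, Van tw.E (tw.P.functor.obj tw.E) b := by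
  obtain ⟨k, ns, ⟨e⟩, hc⟩ := tw.H_iso (tw.P.functor.obj tw.E)
  have hb : ∀ z : ℤ, ¬ Van tw.E (tw.P.functor.obj tw.E) z → -(∑ i, |ns i|) ≤ z := by
    intro z hz
    have h1 : Module.finrank ℂ (tw.E ⟶ (tw.P.functor.obj tw.E)⟦z⟧) ≠ 0 := by
      intro h0
      have := Module.finrank_zero_iff.1 h0
      exact hz fun φ => Subsingleton.elim _ _
    rw [← hc z] at h1
    obtain ⟨i, hi⟩ := Finset.card_pos.1 (Nat.pos_of_ne_zero h1)
    have hi' := (Finset.mem_filter.1 hi).2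
    have h2 : |ns i| ≤ ∑ i, |ns i| :=
      Finset.single_le_sum (f := fun i => |ns i|) (fun j _ => abs_nonneg _) (Finset.mem_univ i)
    have h3 := le_abs_self (ns i)
    omega
  obtain ⟨a, ha, hmin⟩ := Int.exists_least_of_bdd ⟨_, hb⟩ ⟨_, exists_top tw⟩
  refine ⟨a, hmin _ (exists_top tw), ha, fun b hb => ?_⟩
  by_contra hcon
  exact absurd (hmin b hcon) (not_le.2 hb)

lemma core (tw : PdTwist C d) (N : C) (h1 : ∀ y : tw.E ⟶ N, y = 0)
    (h2 : ∀ y : (tw.H tw.E)⟦(1 : ℤ)⟧ ⟶ N, y = 0)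
    (φ : (tw.H tw.E)⟦(-2 : ℤ)⟧⟦(1 : ℤ)⟧ ⟶ N)
    (h : tw.dl tw.E ≫ (tw.π tw.E ≫ φ)⟦(1 : ℤ)⟧' = 0) : φ = 0 := by
  obtain ⟨y, hy⟩ := yon₃ (tri_rot (tw.outerTri tw.E)) _ h
  have hy0 : y = 0 := by
    obtain ⟨y0, rfl⟩ := (shiftFunctor C (1 : ℤ)).map_surjective y
    rw [h1 y0, Functor.map_zero]
  have hπ : tw.π tw.E ≫ φ = 0 := by
    apply (shiftFunctor C (1 : ℤ)).map_injective
    rw [hy, hy0, comp_zero, Functor.map_zero]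
  obtain ⟨z, hz⟩ := yon₃ (tri_rot (tw.innerTri tw.E)) _ hπ
  rw [hz, h2 z, comp_zero]

theorem PE_iso (tw : PdTwist C d) :
    Nonempty (tw.P.functor.obj tw.E ≅ tw.E⟦-(2 * (d : ℤ))⟧) := by
  obtain ⟨a, had, hVa, hmin⟩ := exists_min tw
  obtain ⟨k, ns, ⟨e⟩, hc⟩ := tw.H_iso tw.E
  obtain ⟨i0, hi0⟩ := ns_exists tw hc d (le_refl d)
  set M := tw.P.functor.obj tw.E with hM
  obtain ⟨ψ, hψ⟩ : ∃ ψ : tw.E ⟶ M⟦a⟧, ψ ≠ 0 := by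
    by_contra hcon
    push Not at hcon
    exact hVa hcon
  -- inclusion and projection of the summand `E⟦-2d⟧`
  let inc : tw.E⟦ns i0⟧ ⟶ tw.H tw.E :=
    biproduct.ι (fun i => (shiftFunctor C (ns i)).obj tw.E) i0 ≫ e.inv
  let pr : tw.H tw.E ⟶ tw.E⟦ns i0⟧ :=
    e.hom ≫ biproduct.π (fun i => (shiftFunctor C (ns i)).obj tw.E) i0
  have hip : inc ≫ pr = 𝟙 _ := by simp [inc, pr]
  let eQ : tw.E⟦ns i0⟧⟦(-2 : ℤ)⟧⟦(1 : ℤ)⟧ ≅ tw.E⟦-(2 * (d : ℤ)) - 1⟧ :=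
    (shiftFunctorAdd' C (-2) 1 (-1) (by ring)).symm.app _ ≪≫
    (shiftFunctorAdd' C (ns i0) (-1) (-(2 * (d : ℤ)) - 1) (by omega)).symm.app _
  let eN : M⟦a⟧⟦-(2 * (d : ℤ)) - 1⟧ ≅ M⟦a - 2 * (d : ℤ) - 1⟧ :=
    (shiftFunctorAdd' C a (-(2 * (d : ℤ)) - 1) (a - 2 * (d : ℤ) - 1) (by ring)).symm.app M
  let φ0 : tw.E⟦ns i0⟧⟦(-2 : ℤ)⟧⟦(1 : ℤ)⟧ ⟶ M⟦a - 2 * (d : ℤ) - 1⟧ :=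
    eQ.hom ≫ ψ⟦-(2 * (d : ℤ)) - 1⟧' ≫ eN.hom
  have hφ0 : φ0 ≠ 0 := by
    intro h0
    apply hψ
    apply (shiftFunctor C (-(2 * (d : ℤ)) - 1)).map_injective
    rw [← cancel_epi eQ.hom, ← cancel_mono eN.hom, Category.assoc]
    rw [Functor.map_zero, comp_zero, zero_comp]
    exact h0
  let φ : (tw.H tw.E)⟦(-2 : ℤ)⟧⟦(1 : ℤ)⟧ ⟶ M⟦a - 2 * (d : ℤ) - 1⟧ :=
    pr⟦(-2 : ℤ)⟧'⟦(1 : ℤ)⟧' ≫ φ0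
  have hφ : φ ≠ 0 := by
    intro h0
    apply hφ0
    have h1 : inc⟦(-2 : ℤ)⟧'⟦(1 : ℤ)⟧' ≫ φ = φ0 := by
      simp only [φ, ← Category.assoc, ← Functor.map_comp, hip, CategoryTheory.Functor.map_id,
        Category.id_comp]
    rw [← h1, h0, comp_zero]
  have hne : tw.dl tw.E ≫ (tw.π tw.E ≫ φ)⟦(1 : ℤ)⟧' ≠ 0 := by
    intro h0
    refine hφ (core tw _ (hmin _ (by omega)) ?_ φ h0)
    intro y
    refine van_iso' (van_biproduct _ 1 ?_) ((shiftFunctor C (1 : ℤ)).mapIso e.symm) y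
    intro i y
    obtain ⟨j, hj, hij⟩ := ns_spec tw hc i
    refine van_iso' ?_ ((shiftFunctorAdd C (ns i) 1).app tw.E) y
    intro y
    exact (hmin (a - 2 * (d : ℤ) - 1 - (ns i + 1)) (by omega)).zero_of (by ring) y
  have ha : a = 2 * (d : ℤ) := by
    by_contra hcon
    apply hne
    refine van_iso (van_PE tw (n := a - 2 * (d : ℤ)) (by omega)) ?_ _
    exact (shiftFunctorAdd' C (a - 2 * (d : ℤ) - 1) 1 (a - 2 * (d : ℤ)) (by ring)).symm.app M
  let e' : M⟦a - 2 * (d : ℤ) - 1⟧⟦(1 : ℤ)⟧ ≅ M :=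
    (shiftFunctorCompIsoId C (a - 2 * (d : ℤ) - 1) 1 (by omega)).app M
  let Q := tw.E⟦ns i0⟧⟦(-2 : ℤ)⟧⟦(1 : ℤ)⟧⟦(1 : ℤ)⟧
  let eQ' : Q ≅ tw.E⟦-(2 * (d : ℤ))⟧ := (shiftFunctor C (1 : ℤ)).mapIso eQ ≪≫
    (shiftFunctorAdd' C (-(2 * (d : ℤ)) - 1) 1 (-(2 * (d : ℤ))) (by ring)).symm.app _
  let u0 : M ⟶ Q := tw.dl tw.E ≫ (tw.π tw.E ≫ pr⟦(-2 : ℤ)⟧'⟦(1 : ℤ)⟧')⟦(1 : ℤ)⟧'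
  let v0 : Q ⟶ M := φ0⟦(1 : ℤ)⟧' ≫ e'.hom
  obtain ⟨u, hu⟩ : ∃ u : M ⟶ Q, u = u0 := ⟨_, rfl⟩
  obtain ⟨v, hv⟩ : ∃ v : Q ⟶ M, v = v0 := ⟨_, rfl⟩
  have huv : u ≫ v ≠ 0 := by
    intro h0
    apply hne
    rw [← cancel_mono e'.hom, zero_comp, ← h0, hu, hv]
    simp only [u0, v0, φ, Functor.map_comp, Category.assoc]
  have hiso : IsIso (u ≫ v) := end_isIso_functor tw.toPdObject tw.P.functor (u ≫ v) huv
  have hvu : v ≫ u ≠ 0 := by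
    intro h0
    apply huv
    rw [← cancel_mono (u ≫ v), zero_comp, Category.assoc, reassoc_of% h0, zero_comp, comp_zero]
  have hiso' : IsIso (v ≫ u) := end_isIso_of_iso
    (end_isIso_functor tw.toPdObject (shiftFunctor C (-(2 * (d : ℤ))))) eQ' (v ≫ u) hvu
  have h1 : IsSplitMono u := ⟨⟨v ≫ inv (u ≫ v), by
    rw [← Category.assoc]; exact IsIso.hom_inv_id _⟩⟩
  have h2 : IsSplitEpi u := ⟨⟨inv (v ≫ u) ≫ v, by
    rw [Category.assoc]; exact IsIso.inv_hom_id _⟩⟩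
  have h3 : IsIso u := isIso_of_epi_of_isSplitMono u
  exact ⟨asIso u ≪≫ eQ'⟩


/-! ### Growth of the graded Hom spaces -/

lemma finrank_functor (o : PdObject C d) (Ψ : C ⥤ C) [Ψ.Full] [Ψ.Faithful] [Ψ.Additive]
    (e : Ψ.obj o.E ≅ o.E) (F : C) :
    Module.finrank ℂ (o.E ⟶ F) = Module.finrank ℂ (o.E ⟶ Ψ.obj F) := by
  have hne : 𝟙 o.E ≠ 0 := fun h => o.nonzero ((IsZero.iff_id_eq_zero _).2 h)
  have hs : ∀ c c' : ℂ, c • 𝟙 o.E = c' • 𝟙 o.E → c = c' := fun c c' h =>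
    smul_left_injective ℂ hne h
  choose σ hσ using fun c : ℂ => end_scalar o (e.inv ≫ Ψ.map (c • 𝟙 o.E) ≫ e.hom)
  have hbij : Function.Bijective σ := by
    constructor
    · intro c c' h
      have h1 := hσ c
      rw [h, ← hσ c', cancel_epi, cancel_mono] at h1
      exact hs _ _ (Ψ.map_injective h1)
    · intro c
      obtain ⟨f, hf⟩ := Ψ.map_surjective (e.hom ≫ (c • 𝟙 o.E) ≫ e.inv)
      obtain ⟨c', rfl⟩ := end_scalar o f
      refine ⟨c', hs _ _ ?_⟩
      rw [← hσ, hf]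
      simp
  let j0 : (o.E ⟶ F) →+ (o.E ⟶ Ψ.obj F) :=
    { toFun := fun f => e.inv ≫ Ψ.map f
      map_zero' := by simp
      map_add' := fun f g => by simp [Functor.map_add] }
  have hj0 : Function.Bijective j0 := by
    constructor
    · intro f g h
      change e.inv ≫ Ψ.map f = e.inv ≫ Ψ.map g at h
      rw [cancel_epi] at h
      exact Ψ.map_injective h
    · intro g
      obtain ⟨f, hf⟩ := Ψ.map_surjective (e.hom ≫ g)
      refine ⟨f, ?_⟩
      change e.inv ≫ Ψ.map f = g
      rw [hf, Iso.inv_hom_id_assoc]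
  have h := rank_eq_of_equiv_equiv σ (AddEquiv.ofBijective j0 hj0) hbij (by
    intro c f
    change e.inv ≫ Ψ.map (c • f) = σ c • (e.inv ≫ Ψ.map f)
    have h1 : c • f = (c • 𝟙 o.E) ≫ f := by simp
    have h2 : σ c • (e.inv ≫ Ψ.map f) = (σ c • 𝟙 o.E) ≫ e.inv ≫ Ψ.map f := by simp
    rw [h1, h2, ← hσ]
    simp only [Functor.map_comp, Category.assoc, Iso.hom_inv_id_assoc])
  unfold Module.finrank
  rw [h]

lemma finrank_twist (tw : PdTwist C d) (F : C) (m : ℤ) :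
    Module.finrank ℂ (tw.E ⟶ (tw.P.functor.obj F)⟦m + 2 * (d : ℤ)⟧) =
      Module.finrank ℂ (tw.E ⟶ F⟦m⟧) := by
  obtain ⟨e⟩ := PE_iso tw
  let _ := tw.commShift
  have hadd : tw.P.functor.Additive := Functor.additive_of_preserves_binary_products _
  have e1 : (tw.P.functor ⋙ shiftFunctor C (2 * (d : ℤ))).obj tw.E ≅ tw.E :=
    (shiftFunctor C (2 * (d : ℤ))).mapIso e ≪≫
      (shiftFunctorCompIsoId C (-(2 * (d : ℤ))) (2 * (d : ℤ)) (by ring)).app tw.E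
  rw [finrank_functor tw.toPdObject (tw.P.functor ⋙ shiftFunctor C (2 * (d : ℤ))) e1 (F⟦m⟧)]
  apply finrank_hom_iso
  exact (shiftFunctorAdd C m (2 * (d : ℤ))).app _ ≪≫
    (shiftFunctor C (2 * (d : ℤ))).mapIso ((tw.P.functor.commShiftIso m).app F).symm

lemma finrank_iterate (tw : PdTwist C d) (G : C) (n : ℕ) : ∀ m : ℤ,
    Module.finrank ℂ (tw.E ⟶ ((fun X => tw.P.functor.obj X)^[n] G)⟦m⟧) =
      Module.finrank ℂ (tw.E ⟶ G⟦m - 2 * (d : ℤ) * n⟧) := by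
  induction n with
  | zero =>
    intro m
    have : m - 2 * (d : ℤ) * ((0 : ℕ) : ℤ) = m := by simp
    rw [this]
    rfl
  | succ n ih =>
    intro m
    rw [Function.iterate_succ_apply']
    have h := finrank_twist tw ((fun X => tw.P.functor.obj X)^[n] G) (m - 2 * (d : ℤ))
    rw [sub_add_cancel, ih] at h
    have h2 : m - 2 * (d : ℤ) * ((n + 1 : ℕ) : ℤ) = m - 2 * (d : ℤ) - 2 * (d : ℤ) * n := by
      push_cast; ring
    rw [h2]
    exact h

lemma sum_exp_eq {k k' : ℕ} (ns : Fin k → ℤ) (ns' : Fin k' → ℤ) (D : ℤ) (t : ℝ)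
    (h : ∀ n : ℤ, (Finset.univ.filter fun i => ns i = -n).card =
      (Finset.univ.filter fun i => ns' i = -(n - D)).card) :
    ∑ i, Real.exp ((ns i : ℝ) * t) =
      Real.exp (-(D : ℝ) * t) * ∑ i, Real.exp ((ns' i : ℝ) * t) := by
  have h1 : (Finset.univ : Finset (Fin k)).val.map ns =
      (Finset.univ : Finset (Fin k')).val.map (fun i => ns' i - D) := by
    ext b
    rw [Multiset.count_map, Multiset.count_map]
    have h2 := h (-b)
    have e1 : (Finset.univ.filter fun i => ns i = - -b) = Finset.univ.filter fun i => b = ns i := by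
      ext i
      simp only [Finset.mem_filter, Finset.mem_univ, true_and]
      omega
    have e2 : (Finset.univ.filter fun i => ns' i = -(-b - D)) =
        Finset.univ.filter fun i => b = ns' i - D := by
      ext i
      simp only [Finset.mem_filter, Finset.mem_univ, true_and]
      omega
    rw [e1, e2] at h2
    exact h2
  have h3 := congrArg (fun s : Multiset ℤ => (s.map fun z : ℤ => Real.exp ((z : ℝ) * t)).sum) h1
  simp only [Multiset.map_map] at h3
  have h4 : ∑ i, Real.exp ((ns i : ℝ) * t) = ∑ i, Real.exp (((ns' i - D : ℤ) : ℝ) * t) := h3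
  rw [h4, Finset.mul_sum]
  refine Finset.sum_congr rfl fun i _ => ?_
  rw [← Real.exp_add]
  push_cast
  ring_nf

/-- Cost of applying the twist once. -/
lemma retVal_twist (tw : PdTwist C d) {G : C} {t δ : ℝ} (hE : RetVal G t tw.E δ) :
    ∃ K : ℝ, 0 ≤ K ∧ ∀ (F : C) (r : ℝ), RetVal G t F r → ∀ (k : ℕ) (ns : Fin k → ℤ),
      Nonempty (tw.H F ≅ biproduct (fun i => (shiftFunctor C (ns i)).obj tw.E)) →
      RetVal G t (tw.P.functor.obj F) (r + K * ∑ i, Real.exp ((ns i : ℝ) * t)) := by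
  have hδ := hE.nonneg
  refine ⟨(1 + Real.exp (-t)) * (Real.exp (((1 : ℤ) : ℝ) * t) *
    ((1 + Real.exp (-t)) * δ + (1 + Real.exp (-t)) * (Real.exp (((1 : ℤ) : ℝ) * t) *
      (Real.exp (((-2 : ℤ) : ℝ) * t) * ((1 + Real.exp (-t)) * δ))))), by positivity, ?_⟩
  intro F r hF k ns ⟨e⟩
  have hH : RetVal G t (tw.H F) _ := (retVal_biproduct hE k ns).of_iso e.symm
  have hT := RetVal.triangle (tri_rot (tw.innerTri F)) hH ((hH.shift (-2)).shift 1)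
  have hP := RetVal.triangle (tri_rot (tw.outerTri F)) hF (hT.shift 1)
  refine cast (congrArg (RetVal G t (tw.P.functor.obj F)) ?_) hP
  ring


lemma retVal_of_splitGenerator {G : C} (hG : IsSplitGenerator C G) (F : C) (t : ℝ) :
    ∃ r, RetVal G t F r := by
  obtain ⟨r, hr⟩ := hG F
  obtain ⟨B, i, p, hB, hip⟩ := retVal_of_mem hr
  obtain ⟨r', hr'⟩ := hB.change t
  exact ⟨r', B, i, p, hr', hip⟩

lemma complexity_nonneg (E F : C) (t : ℝ) : 0 ≤ complexity C E F t :=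
  Real.sInf_nonneg fun _ hx => (retVal_of_mem hx).nonneg

lemma complexity_iterate_le (tw : PdTwist C d) {t : ℝ} (ht : t ≤ 0) {G : C}
    (hG : IsSplitGenerator C G) :
    ∃ a b : ℝ, 0 ≤ a ∧ 0 ≤ b ∧ ∀ n : ℕ,
      complexity C G ((fun X => tw.P.functor.obj X)^[n] G) t ≤
        (a + b * n) * Real.exp (n * (-2 * d * t)) := by
  obtain ⟨δ, hδ⟩ := retVal_of_splitGenerator hG tw.E t
  obtain ⟨a, ha⟩ := retVal_of_splitGenerator hG G t
  obtain ⟨K, hK, hstep⟩ := retVal_twist tw hδ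
  obtain ⟨k0, ns0, -, hc0⟩ := tw.H_iso G
  set S := ∑ i, Real.exp ((ns0 i : ℝ) * t) with hS
  have hS0 : 0 ≤ S := Finset.sum_nonneg fun i _ => (Real.exp_pos _).le
  have hdt : 0 ≤ -2 * (d : ℝ) * t := by
    have := mul_nonneg (Nat.cast_nonneg (α := ℝ) d) (neg_nonneg.2 ht)
    linarith
  have key : ∀ n : ℕ, ∃ r, RetVal G t ((fun X => tw.P.functor.obj X)^[n] G) r ∧
      r ≤ (a + K * S * n) * Real.exp (n * (-2 * d * t)) := by
    intro n
    induction n with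
    | zero => exact ⟨a, ha, by simp⟩
    | succ n ih =>
      obtain ⟨r, hr, hle⟩ := ih
      obtain ⟨k, ns, hiso, hc⟩ := tw.H_iso ((fun X => tw.P.functor.obj X)^[n] G)
      have hsum := sum_exp_eq ns ns0 (2 * (d : ℤ) * n) t (by
        intro m
        rw [hc, hc0]
        exact finrank_iterate tw G n m)
      have h1 := hstep _ r hr k ns hiso
      rw [Function.iterate_succ_apply']
      refine ⟨_, h1, ?_⟩
      rw [hsum, ← hS]
      have h2 : Real.exp (-((2 * (d : ℤ) * n : ℤ) : ℝ) * t) = Real.exp (n * (-2 * d * t)) := by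
        congr 1
        push_cast
        ring
      rw [h2]
      have h3 : Real.exp (n * (-2 * d * t)) ≤ Real.exp (((n + 1 : ℕ) : ℝ) * (-2 * d * t)) := by
        apply Real.exp_le_exp.2
        push_cast
        linarith
      have ha0 := ha.nonneg
      calc r + K * (Real.exp (n * (-2 * d * t)) * S)
          ≤ (a + K * S * n) * Real.exp (n * (-2 * d * t))
              + K * (Real.exp (n * (-2 * d * t)) * S) := by linarith
        _ = (a + K * S * ((n + 1 : ℕ) : ℝ)) * Real.exp (n * (-2 * d * t)) := by
            push_cast; ring
        _ ≤ _ := mul_le_mul_of_nonneg_left h3 (by positivity)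
  refine ⟨a, K * S, ha.nonneg, by positivity, fun n => ?_⟩
  obtain ⟨r, hr, hle⟩ := key n
  exact hr.complexity_le.trans hle

lemma limsup_aux (x : ℕ → ℝ) (hx : ∀ n, 0 ≤ x n) {a b c : ℝ} (ha : 0 ≤ a) (hb : 0 ≤ b)
    (hc : 0 ≤ c) (h : ∀ n : ℕ, x n ≤ (a + b * n) * Real.exp (n * c)) :
    atTop.limsup (fun n : ℕ => ((Real.log (x n) / n : ℝ) : EReal)) ≤ ((c : ℝ) : EReal) := by
  have h1 : ∀ n : ℕ, 1 ≤ n →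
      Real.log (x n) / n ≤ Real.log (a + b + 1) / n + Real.log n / n + c := by
    intro n hn
    have hn1 : (1 : ℝ) ≤ n := by exact_mod_cast hn
    have hn0 : (0 : ℝ) < n := by linarith
    have hB : x n ≤ (a + b + 1) * n * Real.exp (n * c) := by
      refine (h n).trans (mul_le_mul_of_nonneg_right ?_ (Real.exp_pos _).le)
      nlinarith
    have hB1 : 1 ≤ (a + b + 1) * n * Real.exp (n * c) := by
      have h2 : 1 ≤ Real.exp (n * c) := Real.one_le_exp (by positivity)
      have h3 : 1 ≤ (a + b + 1) * n := by nlinarith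
      nlinarith
    have hlog : Real.log (x n) ≤ Real.log ((a + b + 1) * n * Real.exp (n * c)) := by
      rcases (hx n).eq_or_lt with h0 | h0
      · rw [← h0, Real.log_zero]
        exact Real.log_nonneg hB1
      · exact Real.log_le_log h0 hB
    rw [Real.log_mul (by positivity) (Real.exp_pos _).ne', Real.log_mul (by positivity) hn0.ne',
      Real.log_exp] at hlog
    calc Real.log (x n) / n ≤ (Real.log (a + b + 1) + Real.log n + n * c) / n := by gcongr
      _ = _ := by field_simp
  have h2 : Tendsto (fun n : ℕ => Real.log (a + b + 1) / n + Real.log n / n + c) atTop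
      (nhds c) := by
    have h3 : Tendsto (fun n : ℕ => Real.log (a + b + 1) / (n : ℝ)) atTop (nhds 0) :=
      tendsto_const_div_atTop_nhds_zero_nat _
    have h4 : Tendsto (fun n : ℕ => Real.log (n : ℝ) / (n : ℝ)) atTop (nhds 0) :=
      (Real.isLittleO_log_id_atTop.tendsto_div_nhds_zero).comp tendsto_natCast_atTop_atTop
    simpa using (h3.add h4).add_const c
  have h5 : Tendsto (fun n : ℕ =>
      ((Real.log (a + b + 1) / n + Real.log n / n + c : ℝ) : EReal)) atTop
      (nhds ((c : ℝ) : EReal)) := (continuous_coe_real_ereal.tendsto c).comp h2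
  rw [← h5.limsup_eq]
  refine limsup_le_limsup ?_
  filter_upwards [eventually_ge_atTop 1] with n hn
  exact_mod_cast h1 n hn

end Helpers

/-- For every `t ≤ 0`, `h_t(P_ℰ) ≤ -2dt` (stated as a `limsup` bound on
the defining sequence of the categorical entropy, for any split generator). -/
theorem entropy_PdTwist_le (d : ℕ) (tw : PdTwist C d) (t : ℝ) (ht : t ≤ 0) :
    ∀ G : C, IsSplitGenerator C G →
      atTop.limsup (fun n : ℕ =>
          ((Real.log (complexity C G ((fun X => tw.P.functor.obj X)^[n] G) t) / n : ℝ) : EReal))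
        ≤ ((-2 * (d : ℝ) * t : ℝ) : EReal) := by
  intro G hG
  obtain ⟨a, b, ha, hb, h⟩ := complexity_iterate_le tw ht hG
  refine limsup_aux _ (fun n => complexity_nonneg _ _ _) ha hb ?_ h
  have := mul_nonneg (Nat.cast_nonneg (α := ℝ) d) (neg_nonneg.2 ht)
  linarith
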